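/- For every integer s ≥ 1 and every filter function ρ there exists a constant c > 0, depending only on s and ρ, such that for every 2π-periodic function f : ℝ → ℂ of class C^s, every even integer N ≥ 2 (with h = 2π/N), and every grid index i ∈ {−N/2+1, …, N/2}, the filtered samples satisfy |(f(α_·)^p)(α_i) − f(α_i)| ≤ c h^{s−1/2} ‖f‖_s. -/

import Mathlib

open scoped BigOperators
open Finset

noncomputable section

/-- Grid spacing `h = 2π/N`. -/
def hgrid (N : ℤ) : ℝ := 2 * Real.pi / N

/-- Grid points `α_j = j h`. -/
def gridPt (N : ℤ) (j : ℤ) : ℝ := j * hgrid N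

/-- Index set `{-N/2+1, …, N/2}`. -/
def idxs (N : ℤ) : Finset ℤ := Finset.Icc (-(N / 2) + 1) (N / 2)

/-- Discrete Fourier coefficient `f̂_k`. -/
def dft (N : ℤ) (f : ℤ → ℂ) (k : ℤ) : ℂ :=
  (N : ℂ)⁻¹ * ∑ j ∈ idxs N, f j * Complex.exp (-(Complex.I * (k : ℂ) * (gridPt N j : ℂ)))

/-- Reconstruction of a discrete function from Fourier coefficients. -/
def idft (N : ℤ) (c : ℤ → ℂ) (j : ℤ) : ℂ :=
  ∑ k ∈ idxs N, c k * Complex.exp (Complex.I * (k : ℂ) * (gridPt N j : ℂ))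

/-- The pseudo-spectral derivative `S_h`. -/
def Sh (N : ℤ) (f : ℤ → ℂ) : ℤ → ℂ :=
  idft N fun k => if k = N / 2 then 0 else Complex.I * (k : ℂ) * dft N f k

/-- The pseudo-spectral antiderivative `S_h⁻¹`. -/
def Shinv (N : ℤ) (f : ℤ → ℂ) : ℤ → ℂ :=
  idft N fun k => if k = 0 then 0 else dft N f k / (Complex.I * (k : ℂ))

/-- The filtered discrete function `f^p`. -/
def filterP (N : ℤ) (ρ : ℝ → ℝ) (f : ℤ → ℂ) : ℤ → ℂ :=
  idft N fun k => (ρ (gridPt N k) : ℂ) * dft N f k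

/-- The filtered derivative `D_h`. -/
def Dh (N : ℤ) (ρ : ℝ → ℝ) (f : ℤ → ℂ) : ℤ → ℂ :=
  idft N fun k => Complex.I * (k : ℂ) * (ρ (gridPt N k) : ℂ) * dft N f k

/-- Discrete `l²` norm. -/
def l2norm (N : ℤ) (f : ℤ → ℂ) : ℝ :=
  Real.sqrt (hgrid N * ∑ j ∈ idxs N, ‖f j‖ ^ 2)

/-- Discrete Hilbert transform `H_h`. -/
def Hh (N : ℤ) (f : ℤ → ℂ) (i : ℤ) : ℂ :=
  ((hgrid N / Real.pi : ℝ) : ℂ) *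
    ∑ j ∈ (idxs N).filter (fun j => Odd (j - i)),
      f j * (Real.cot ((gridPt N i - gridPt N j) / 2) : ℂ)

/-- Discrete inner product `(f,g)_h`. -/
def dip (N : ℤ) (f g : ℤ → ℂ) : ℂ :=
  (hgrid N : ℂ) * ∑ j ∈ idxs N, (starRingEnd ℂ) (f j) * g j

/-- Discrete mean `⟨f⟩_h`. -/
def dmean (N : ℤ) (f : ℤ → ℂ) : ℂ :=
  (N : ℂ)⁻¹ * ∑ j ∈ idxs N, f j

/-- The discrete function of samples of a periodic function. -/
def samples (N : ℤ) (f : ℝ → ℂ) : ℤ → ℂ := fun j => f (gridPt N j)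

/-- Fourier coefficient of a `2π`-periodic function. -/
def fourierCoeffP (f : ℝ → ℂ) (k : ℤ) : ℂ :=
  ((2 * Real.pi)⁻¹ : ℝ) * ∫ α in (-Real.pi)..Real.pi, f α * Complex.exp (-(Complex.I * (k : ℂ) * (α : ℂ)))

/-- Sobolev norm `‖f‖_s`. -/
def sobolevNorm (s : ℕ) (f : ℝ → ℂ) : ℝ :=
  Real.sqrt (∑' k : ℤ, (1 + (k : ℝ) ^ 2) ^ s * ‖fourierCoeffP f k‖ ^ 2)

/-- A filter (cutoff) function for numerical filtering. -/
structure IsFilter (ρ : ℝ → ℝ) : Prop where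
  even : ∀ x, ρ (-x) = ρ x
  nonneg : ∀ x, 0 ≤ ρ x
  smooth : ∃ r : ℕ, 2 < r ∧ ContDiff ℝ r ρ
  zero_at_pi : ρ Real.pi = 0
  zero_at_neg_pi : ρ (-Real.pi) = 0
  deriv_zero_at_pi : deriv ρ Real.pi = 0
  deriv_zero_at_neg_pi : deriv ρ (-Real.pi) = 0
  one_near_zero : ∃ μ : ℝ, 0 < μ ∧ μ < 1 ∧ ∀ x : ℝ, |x| ≤ μ * Real.pi → ρ x = 1

/-!
On the grid the mode `e^{imα}` coincides with `e^{ikα}`, where `k` is the representative of `m`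
modulo `N` in `{-N/2+1, …, N/2}`, so filtering its samples multiplies them by `ρ(kh)`. Because
`|k| ≤ |m|`, this factor is `1` as soon as `|m|h ≤ δ`, where `ρ = 1` on `[-δ, δ]`. In the Fourier
series of the error only the frequencies `|m| > δ/h` remain, with bounded factors `ρ(kh) - 1`, and
Cauchy–Schwarz with `∑_{|m| > δ/h} |m|^{-2s} = O(h^{2s-1})` gives the rate `h^{s-1/2}`.
-/

/-- The Fourier mode `x ↦ e^{ikx}`. -/
def expMode (k : ℤ) (x : ℝ) : ℂ := Complex.exp (Complex.I * k * x)

section ExpMode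

open Real

lemma expMode_neg (k : ℤ) (x : ℝ) : expMode (-k) x = Complex.exp (-(Complex.I * k * x)) := by
  simp only [expMode, Int.cast_neg, mul_neg, neg_mul]

lemma expMode_add (k l : ℤ) (x : ℝ) : expMode (k + l) x = expMode k x * expMode l x := by
  simp only [expMode, ← Complex.exp_add, Int.cast_add, mul_add, add_mul]

lemma norm_expMode (k : ℤ) (x : ℝ) : ‖expMode k x‖ = 1 := by
  rw [expMode, mul_assoc, mul_comm]
  exact_mod_cast Complex.norm_exp_ofReal_mul_I (k * x)

lemma expMode_periodic (k : ℤ) : Function.Periodic (expMode k) (2 * π) := fun x => by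
  rw [expMode, expMode, Complex.exp_eq_exp_iff_exists_int]
  exact ⟨k, by push_cast; ring⟩

lemma hasDerivAt_expMode (k : ℤ) (x : ℝ) :
    HasDerivAt (expMode k) (Complex.I * k * expMode k x) x := by
  have h : HasDerivAt (fun x : ℝ => Complex.I * k * (x : ℂ)) (Complex.I * k * 1) x :=
    (hasDerivAt_id x).ofReal_comp.const_mul _
  rw [mul_one] at h
  exact (mul_comm _ (expMode k x)) ▸ h.cexp

lemma continuous_expMode (k : ℤ) : Continuous (expMode k) :=
  continuous_iff_continuousAt.2 fun x => (hasDerivAt_expMode k x).continuousAt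

lemma fourier_coe_eq_expMode (k : ℤ) (x : ℝ) :
    fourier k (x : AddCircle (2 * π)) = expMode k x := by
  have hπ : (π : ℂ) ≠ 0 := Complex.ofReal_ne_zero.2 Real.pi_ne_zero
  rw [fourier_coe_apply, expMode]
  congr 1
  push_cast
  field_simp

end ExpMode

section FourierCoefficients

open Real

lemma fourierCoeffP_eq_integral_expMode (f : ℝ → ℂ) (k : ℤ) :
    fourierCoeffP f k = ((2 * π)⁻¹ : ℝ) * ∫ x in (-π)..π, f x * expMode (-k) x := by
  simp only [fourierCoeffP, expMode_neg]

lemma fourierCoeffP_eq_fourierCoeff [Fact (0 < 2 * π)] (g : AddCircle (2 * π) → ℂ) (k : ℤ) :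
    fourierCoeffP (fun x : ℝ => g x) k = fourierCoeff g k := by
  rw [fourierCoeff_eq_intervalIntegral g k (-π), fourierCoeffP_eq_integral_expMode,
    show -π + 2 * π = π by ring, Complex.real_smul, one_div]
  simp only [fourier_coe_eq_expMode, smul_eq_mul, mul_comm]

lemma exists_continuousMap_fourierCoeff_eq [Fact (0 < 2 * π)] {f : ℝ → ℂ}
    (hf : Function.Periodic f (2 * π)) (hc : Continuous f) :
    ∃ F : C(AddCircle (2 * π), ℂ), (∀ x : ℝ, F x = f x) ∧ fourierCoeff F = fourierCoeffP f :=
  ⟨⟨hf.lift, continuous_coinduced_dom.mpr hc⟩, fun _ => rfl,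
    funext fun k => (fourierCoeffP_eq_fourierCoeff _ k).symm⟩

lemma summable_sq_fourierCoeffP {f : ℝ → ℂ} (hf : Function.Periodic f (2 * π))
    (hc : Continuous f) : Summable fun k : ℤ => ‖fourierCoeffP f k‖ ^ 2 := by
  have : Fact (0 < 2 * π) := ⟨Real.two_pi_pos⟩
  obtain ⟨F, -, hF⟩ := exists_continuousMap_fourierCoeff_eq hf hc
  simpa only [fourierCoeff_toLp, hF] using
    (hasSum_sq_fourierCoeff (ContinuousMap.toLp 2 AddCircle.haarAddCircle ℂ F)).summable

lemma hasSum_fourierCoeffP {f : ℝ → ℂ} (hf : Function.Periodic f (2 * π)) (hc : Continuous f)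
    (hs : Summable (fourierCoeffP f)) (x : ℝ) :
    HasSum (fun k : ℤ => fourierCoeffP f k * expMode k x) (f x) := by
  have : Fact (0 < 2 * π) := ⟨Real.two_pi_pos⟩
  obtain ⟨F, hFf, hF⟩ := exists_continuousMap_fourierCoeff_eq hf hc
  have hsF : Summable (fourierCoeff F) := by rwa [hF]
  simpa only [hF, hFf, fourier_coe_eq_expMode, smul_eq_mul] using
    has_pointwise_sum_fourier_series_of_summable hsF (x : AddCircle (2 * π))

lemma fourierCoeffP_of_hasDerivAt {f f' : ℝ → ℂ} (hf : Function.Periodic f (2 * π))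
    (hf' : ∀ x, HasDerivAt f (f' x) x)
    (hf'int : IntervalIntegrable f' MeasureTheory.volume (-π) π) (k : ℤ) :
    fourierCoeffP f' k = Complex.I * k * fourierCoeffP f k := by
  have hboundary : f π * expMode (-k) π = f (-π) * expMode (-k) (-π) := by
    rw [show π = -π + 2 * π by ring, hf, expMode_periodic, ← show π = -π + 2 * π by ring]
  have hparts := intervalIntegral.integral_mul_deriv_eq_deriv_mul (a := -π) (b := π)
    (fun x _ => hasDerivAt_expMode (-k) x) (fun x _ => hf' x)
    ((continuous_expMode (-k)).const_mul _ |>.intervalIntegrable _ _) hf'int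
  have hderiv : ∫ x in (-π)..π, Complex.I * (-k : ℤ) * expMode (-k) x * f x =
      -(Complex.I * k) * ∫ x in (-π)..π, f x * expMode (-k) x := by
    rw [← intervalIntegral.integral_const_mul]
    exact intervalIntegral.integral_congr fun x _ => by push_cast; ring
  simp only [hderiv, mul_comm (expMode _ _), hboundary] at hparts
  rw [fourierCoeffP_eq_integral_expMode, fourierCoeffP_eq_integral_expMode, hparts]
  ring

lemma periodic_iteratedDeriv {𝕜 E : Type*} [NontriviallyNormedField 𝕜] [NormedAddCommGroup E]
    [NormedSpace 𝕜 E] {f : 𝕜 → E} {c : 𝕜} (hf : Function.Periodic f c) (n : ℕ) :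
    Function.Periodic (iteratedDeriv n f) c := fun x => by
  have h := congrFun (iteratedDeriv_comp_add_const n f c) x
  rw [hf.funext] at h
  exact h.symm

lemma fourierCoeffP_iteratedDeriv {f : ℝ → ℂ} (hf : Function.Periodic f (2 * π)) {n : ℕ}
    (hc : ContDiff ℝ n f) (k : ℤ) :
    fourierCoeffP (iteratedDeriv n f) k = (Complex.I * k) ^ n * fourierCoeffP f k := by
  induction n with
  | zero => rw [iteratedDeriv_zero, pow_zero, one_mul]
  | succ n ih =>
    have hd (x : ℝ) : HasDerivAt (iteratedDeriv n f) (iteratedDeriv (n + 1) f x) x := by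
      rw [iteratedDeriv_succ]
      exact (hc.differentiable_iteratedDeriv' n x).hasDerivAt
    rw [fourierCoeffP_of_hasDerivAt (periodic_iteratedDeriv hf n) hd
      ((hc.continuous_iteratedDeriv' (n + 1)).intervalIntegrable _ _),
      ih (hc.of_le (by exact_mod_cast n.le_succ)), pow_succ']
    ring

lemma summable_sobolev_of_contDiff {f : ℝ → ℂ} (hf : Function.Periodic f (2 * π)) {s : ℕ}
    (hc : ContDiff ℝ s f) :
    Summable fun k : ℤ => (1 + (k : ℝ) ^ 2) ^ s * ‖fourierCoeffP f k‖ ^ 2 := by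
  have h₀ := summable_sq_fourierCoeffP hf hc.continuous
  have hs := summable_sq_fourierCoeffP (periodic_iteratedDeriv hf s)
    (hc.continuous_iteratedDeriv' s)
  refine .of_nonneg_of_le (fun k => by positivity) (fun k => ?_)
    ((h₀.add hs).mul_left (2 ^ (s - 1) : ℝ))
  have hderiv : ‖fourierCoeffP (iteratedDeriv s f) k‖ ^ 2 =
      ((k : ℝ) ^ 2) ^ s * ‖fourierCoeffP f k‖ ^ 2 := by
    rw [fourierCoeffP_iteratedDeriv hf hc, norm_mul, norm_pow, norm_mul, Complex.norm_I, one_mul,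
      Complex.norm_intCast, mul_pow, pow_right_comm, sq_abs]
  calc (1 + (k : ℝ) ^ 2) ^ s * ‖fourierCoeffP f k‖ ^ 2
      ≤ 2 ^ (s - 1) * (1 ^ s + ((k : ℝ) ^ 2) ^ s) * ‖fourierCoeffP f k‖ ^ 2 := by
        gcongr
        exact add_pow_le zero_le_one (sq_nonneg _) s
    _ = 2 ^ (s - 1) * (‖fourierCoeffP f k‖ ^ 2 + ‖fourierCoeffP (iteratedDeriv s f) k‖ ^ 2) := by
        rw [hderiv]
        ring

end FourierCoefficients

section WeightedSequences

lemma summable_of_summable_mul_sq_norm {ι E : Type*} [NormedAddCommGroup E] [CompleteSpace E]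
    {w : ι → ℝ} {c : ι → E} (hw : ∀ k, 0 < w k) (hwinv : Summable fun k => (w k)⁻¹)
    (hc : Summable fun k => w k * ‖c k‖ ^ 2) : Summable c := by
  refine .of_norm_bounded (hwinv.add hc) fun k => ?_
  have hAMGM : 0 ≤ (w k)⁻¹ - 2 * ‖c k‖ + w k * ‖c k‖ ^ 2 :=
    calc 0 ≤ w k * ((w k)⁻¹ - ‖c k‖) ^ 2 := mul_nonneg (hw k).le (sq_nonneg _)
      _ = _ := by field_simp [(hw k).ne']; ring
  linarith [norm_nonneg (c k)]

lemma summable_inv_one_add_int_sq_pow {s : ℕ} (hs : 1 ≤ s) :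
    Summable fun k : ℤ => ((1 + (k : ℝ) ^ 2) ^ s)⁻¹ := by
  refine (Real.summable_one_div_int_pow.2 one_lt_two).of_norm_bounded_eventually ?_
  filter_upwards [(Set.finite_singleton (0 : ℤ)).compl_mem_cofinite] with k hk
  have hk₀ : 0 < (k : ℝ) ^ 2 := by have : k ≠ 0 := hk; positivity
  rw [Real.norm_of_nonneg (by positivity), one_div]
  gcongr
  calc (k : ℝ) ^ 2 ≤ 1 + (k : ℝ) ^ 2 := by linarith
    _ ≤ (1 + (k : ℝ) ^ 2) ^ s := le_self_pow₀ (by linarith) (by lia)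

lemma sum_natAbs_le_two_mul_sum_image (F : Finset ℤ) {g : ℕ → ℝ} (hg : ∀ n, 0 ≤ g n) :
    ∑ m ∈ F, g m.natAbs ≤ 2 * ∑ n ∈ F.image Int.natAbs, g n := by
  rw [sum_comp, mul_sum]
  refine sum_le_sum fun n _ => ?_
  have hsub : {m ∈ F | m.natAbs = n} ⊆ {(n : ℤ), -(n : ℤ)} := fun m hm => by
    simpa only [mem_insert, mem_singleton] using Int.natAbs_eq_iff.1 (mem_filter.1 hm).2
  rw [nsmul_eq_mul]
  gcongr
  · exact hg n
  · exact_mod_cast (card_le_card hsub).trans card_le_two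

lemma sum_int_inv_sq_le {F : Finset ℤ} {K : ℝ} (hK : 0 < K) (hF : ∀ m ∈ F, K < |(m : ℝ)|) :
    ∑ m ∈ F, ((m : ℝ) ^ 2)⁻¹ ≤ 4 / K := by
  have hsub : F.image Int.natAbs ⊆ Ioo ⌊K⌋₊ (F.sup Int.natAbs + 1) := fun n hn => by
    obtain ⟨m, hm, rfl⟩ := mem_image.1 hn
    refine mem_Ioo.2 ⟨(Nat.floor_lt hK.le).2 ?_, Nat.lt_succ_of_le (le_sup hm)⟩
    simpa only [Nat.cast_natAbs, Int.cast_abs] using hF m hm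
  calc ∑ m ∈ F, ((m : ℝ) ^ 2)⁻¹
      = ∑ m ∈ F, ((m.natAbs : ℝ) ^ 2)⁻¹ := by simp only [Nat.cast_natAbs, Int.cast_abs, sq_abs]
    _ ≤ 2 * ∑ n ∈ F.image Int.natAbs, ((n : ℝ) ^ 2)⁻¹ :=
        sum_natAbs_le_two_mul_sum_image F (g := fun n => ((n : ℝ) ^ 2)⁻¹) fun n => by positivity
    _ ≤ 2 * ∑ n ∈ Ioo ⌊K⌋₊ (F.sup Int.natAbs + 1), ((n : ℝ) ^ 2)⁻¹ := by gcongr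
    _ ≤ 2 * (2 / (⌊K⌋₊ + 1)) := by gcongr; exact sum_Ioo_inv_sq_le _ _
    _ ≤ 2 * (2 / K) := by gcongr; exact (Nat.lt_floor_add_one K).le
    _ = 4 / K := by ring

lemma sqrt_sum_inv_pow_sq_le {s : ℕ} (hs : 1 ≤ s) {F : Finset ℤ} {K : ℝ} (hK : 0 < K)
    (hF : ∀ m ∈ F, K < |(m : ℝ)|) :
    √(∑ m ∈ F, ((|(m : ℝ)| ^ s)⁻¹) ^ 2) ≤ 2 * K⁻¹ ^ ((s : ℝ) - 1 / 2) := by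
  obtain ⟨t, rfl⟩ := Nat.exists_eq_add_of_le' hs
  refine Real.sqrt_le_iff.2 ⟨by positivity, ?_⟩
  calc ∑ m ∈ F, ((|(m : ℝ)| ^ (t + 1))⁻¹) ^ 2
      = ∑ m ∈ F, |(m : ℝ)|⁻¹ ^ (2 * t) * ((m : ℝ) ^ 2)⁻¹ :=
        sum_congr rfl fun m _ => by rw [← sq_abs (m : ℝ)]; ring
    _ ≤ ∑ m ∈ F, K⁻¹ ^ (2 * t) * ((m : ℝ) ^ 2)⁻¹ := by
        gcongr with m hm
        exact (hF m hm).le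
    _ ≤ K⁻¹ ^ (2 * t) * (4 / K) := by
        rw [← mul_sum]
        gcongr
        exact sum_int_inv_sq_le hK hF
    _ = 4 * K⁻¹ ^ (2 * t + 1) := by ring
    _ = (2 * K⁻¹ ^ (((t + 1 : ℕ) : ℝ) - 1 / 2)) ^ 2 := by
        rw [mul_pow, ← Real.rpow_mul_natCast (by positivity), ← Real.rpow_natCast]
        push_cast
        ring_nf

lemma sum_norm_le_of_lt_abs {E : Type*} [NormedAddCommGroup E] {s : ℕ} (hs : 1 ≤ s) {c : ℤ → E}
    (hc : Summable fun k : ℤ => (1 + (k : ℝ) ^ 2) ^ s * ‖c k‖ ^ 2) {K : ℝ} (hK : 0 < K)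
    {F : Finset ℤ} (hF : ∀ m ∈ F, K < |(m : ℝ)|) :
    ∑ m ∈ F, ‖c m‖ ≤
      2 * K⁻¹ ^ ((s : ℝ) - 1 / 2) * √(∑' k : ℤ, (1 + (k : ℝ) ^ 2) ^ s * ‖c k‖ ^ 2) := by
  have hweight (m : ℤ) : (|(m : ℝ)| ^ s * ‖c m‖) ^ 2 ≤ (1 + (m : ℝ) ^ 2) ^ s * ‖c m‖ ^ 2 := by
    rw [mul_pow, pow_right_comm, sq_abs]
    gcongr
    linarith
  calc ∑ m ∈ F, ‖c m‖
      = ∑ m ∈ F, (|(m : ℝ)| ^ s)⁻¹ * (|(m : ℝ)| ^ s * ‖c m‖) :=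
        sum_congr rfl fun m hm => by
          rw [inv_mul_cancel_left₀ (pow_pos (hK.trans (hF m hm)) s).ne']
    _ ≤ √(∑ m ∈ F, ((|(m : ℝ)| ^ s)⁻¹) ^ 2) * √(∑ m ∈ F, (|(m : ℝ)| ^ s * ‖c m‖) ^ 2) :=
        Real.sum_mul_le_sqrt_mul_sqrt F _ _
    _ ≤ _ := by
        gcongr
        · exact sqrt_sum_inv_pow_sq_le hs hK hF
        · exact (sum_le_sum fun m _ => hweight m).trans
            (hc.sum_le_tsum F fun _ _ => by positivity)

lemma norm_le_of_hasSum_of_lowFreq_eq_zero {E G : Type*} [NormedAddCommGroup E]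
    [NormedAddCommGroup G] {s : ℕ} (hs : 1 ≤ s) {c : ℤ → E}
    (hc : Summable fun k : ℤ => (1 + (k : ℝ) ^ 2) ^ s * ‖c k‖ ^ 2) {K : ℝ} (hK : 0 < K)
    {a : ℤ → G} {S : G} (ha : HasSum a S)
    (hlow : ∀ m : ℤ, |(m : ℝ)| ≤ K → a m = 0) {C : ℝ} (hC : 0 ≤ C)
    (hhigh : ∀ m, ‖a m‖ ≤ C * ‖c m‖) :
    ‖S‖ ≤ C *
      (2 * K⁻¹ ^ ((s : ℝ) - 1 / 2) * √(∑' k : ℤ, (1 + (k : ℝ) ^ 2) ^ s * ‖c k‖ ^ 2)) := by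
  refine le_of_tendsto' ha.norm fun F => ?_
  calc ‖∑ m ∈ F, a m‖ = ‖∑ m ∈ F with K < |((m : ℤ) : ℝ)|, a m‖ := by
        rw [sum_filter_of_ne fun m _ hm => not_le.1 (mt (hlow m) hm)]
    _ ≤ ∑ m ∈ F with K < |((m : ℤ) : ℝ)|, C * ‖c m‖ := norm_sum_le_of_le _ fun m _ => hhigh m
    _ ≤ _ := by
        rw [← mul_sum]
        gcongr
        exact sum_norm_le_of_lt_abs hs hc hK fun m hm => (mem_filter.1 hm).2

end WeightedSequences

/-- The representative in `idxs N` of the frequency `m` modulo `N` (for even `N > 0`), that is, the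
frequency as which the grid sees the mode `x ↦ e^{imx}`. -/
def aliasFreq (N m : ℤ) : ℤ := (m + N / 2 - 1) % N - N / 2 + 1

section Grid

variable {N : ℤ}

lemma hgrid_pos (hN : 0 < N) : 0 < hgrid N :=
  div_pos Real.two_pi_pos (Int.cast_pos.2 hN)

lemma abs_gridPt (hN : 0 < N) (k : ℤ) : |gridPt N k| = |(k : ℝ)| * hgrid N := by
  rw [gridPt, abs_mul, abs_of_pos (hgrid_pos hN)]

lemma expMode_gridPt (k j : ℤ) : expMode k (gridPt N j) = expMode k (hgrid N) ^ j := by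
  rw [expMode, expMode, ← Complex.exp_int_mul, gridPt]
  push_cast
  ring_nf

lemma expMode_hgrid_eq_one_iff (hN : 0 < N) (k : ℤ) : expMode k (hgrid N) = 1 ↔ N ∣ k := by
  lift N to ℕ using hN.le
  have hroot := Complex.isPrimitiveRoot_exp N (by lia)
  rw [← hroot.zpow_eq_one_iff_dvd, ← Complex.exp_int_mul, expMode, hgrid]
  push_cast
  ring_nf

lemma expMode_gridPt_congr (hN : 0 < N) {k m : ℤ} (h : N ∣ m - k) (j : ℤ) :
    expMode m (gridPt N j) = expMode k (gridPt N j) := by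
  rw [expMode_gridPt, expMode_gridPt, ← sub_add_cancel m k, expMode_add,
    (expMode_hgrid_eq_one_iff hN _).2 h, one_mul]

lemma sum_Ico_zpow_eq_zero {𝕜 : Type*} [DivisionRing 𝕜] {z : 𝕜} (hz : z ≠ 1) {n : ℕ}
    (hzn : z ^ n = 1) (a : ℤ) : ∑ j ∈ Ico a (a + n), z ^ j = 0 := by
  rcases eq_or_ne n 0 with rfl | hn
  · rw [Nat.cast_zero, add_zero, Ico_self, sum_empty]
  have hz₀ : z ≠ 0 := fun h => zero_ne_one (by rwa [h, zero_pow hn] at hzn)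
  rw [Int.Ico_eq_finset_map, sum_map]
  simp only [add_sub_cancel_left, Int.toNat_natCast, Function.Embedding.trans_apply,
    Nat.castEmbedding_apply, addLeftEmbedding_apply, zpow_add₀ hz₀, zpow_natCast]
  rw [← mul_sum, geom_sum_eq hz, hzn, sub_self, zero_div, mul_zero]

lemma idxs_eq_Ico (he : Even N) : idxs N = Ico (-(N / 2) + 1) (-(N / 2) + 1 + N) := by
  obtain ⟨M, rfl⟩ := he
  ext j
  simp only [idxs, mem_Icc, mem_Ico]
  lia

lemma expMode_hgrid_zpow (hN : N ≠ 0) (k : ℤ) : expMode k (hgrid N) ^ N = 1 := by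
  have hperiod : gridPt N N = 0 + 2 * Real.pi := by
    rw [gridPt, hgrid, zero_add, mul_div_cancel₀ _ (Int.cast_ne_zero.2 hN)]
  rw [← expMode_gridPt, hperiod, expMode_periodic, expMode, Complex.ofReal_zero, mul_zero,
    Complex.exp_zero]

lemma sum_expMode_gridPt (hN : 0 < N) (he : Even N) (k : ℤ) :
    ∑ j ∈ idxs N, expMode k (gridPt N j) = if N ∣ k then (N : ℂ) else 0 := by
  simp only [idxs_eq_Ico he, expMode_gridPt]
  lift N to ℕ using hN.le
  split_ifs with h
  · simp only [(expMode_hgrid_eq_one_iff hN k).2 h, one_zpow, sum_const, Int.card_Ico,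
      add_sub_cancel_left, Int.toNat_natCast, nsmul_eq_mul, mul_one, Int.cast_natCast]
  · exact sum_Ico_zpow_eq_zero (mt (expMode_hgrid_eq_one_iff hN k).1 h)
      (by exact_mod_cast expMode_hgrid_zpow hN.ne' k) _

lemma dft_samples_expMode (hN : 0 < N) (he : Even N) (m k : ℤ) :
    dft N (samples N (expMode m)) k = if N ∣ m - k then 1 else 0 := by
  simp only [dft, samples, ← expMode_neg, ← expMode_add, ← sub_eq_add_neg,
    sum_expMode_gridPt hN he]
  split_ifs
  · exact inv_mul_cancel₀ (Int.cast_ne_zero.2 hN.ne')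
  · exact mul_zero _

variable (N) in
lemma dvd_sub_aliasFreq (m : ℤ) : N ∣ m - aliasFreq N m := by
  have h := Int.dvd_self_sub_emod (x := m + N / 2 - 1) (m := N)
  rwa [show m - aliasFreq N m = m + N / 2 - 1 - (m + N / 2 - 1) % N by rw [aliasFreq]; ring]

lemma aliasFreq_mem_idxs (hN : 0 < N) (he : Even N) (m : ℤ) : aliasFreq N m ∈ idxs N := by
  have hnonneg := Int.emod_nonneg (m + N / 2 - 1) hN.ne'
  have hlt := Int.emod_lt_of_pos (m + N / 2 - 1) hN
  simp only [idxs_eq_Ico he, mem_Ico, aliasFreq]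
  lia

lemma eq_of_mem_idxs_of_dvd_sub (he : Even N) {k l : ℤ} (hk : k ∈ idxs N) (hl : l ∈ idxs N)
    (h : N ∣ k - l) : k = l := by
  rw [idxs_eq_Ico he, mem_Ico] at hk hl
  exact sub_eq_zero.1 (Int.eq_zero_of_abs_lt_dvd h (abs_lt.2 (by lia)))

lemma two_mul_abs_le_of_mem_idxs {k : ℤ} (hk : k ∈ idxs N) : 2 * |k| ≤ N := by
  rw [idxs, mem_Icc] at hk
  rcases abs_cases k with h | h <;> lia

lemma abs_le_abs_of_mem_idxs_of_dvd_sub {k m : ℤ} (hk : k ∈ idxs N) (h : N ∣ m - k) :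
    |k| ≤ |m| := by
  have hkN := two_mul_abs_le_of_mem_idxs hk
  rcases eq_or_ne (m - k) 0 with h₀ | h₀
  · rw [sub_eq_zero.1 h₀]
  · have hNle := Int.le_of_dvd (abs_pos.2 h₀) ((dvd_abs _ _).2 h)
    linarith [abs_sub m k]

lemma abs_gridPt_le_pi (hN : 0 < N) {k : ℤ} (hk : k ∈ idxs N) : |gridPt N k| ≤ Real.pi := by
  have hkN : 2 * |(k : ℝ)| ≤ N := by exact_mod_cast two_mul_abs_le_of_mem_idxs hk
  rw [abs_gridPt hN, hgrid, mul_div_assoc', div_le_iff₀ (Int.cast_pos.2 hN)]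
  linarith [mul_le_mul_of_nonneg_left hkN Real.pi_pos.le]

lemma abs_gridPt_aliasFreq_le (hN : 0 < N) (he : Even N) (m : ℤ) :
    |gridPt N (aliasFreq N m)| ≤ |gridPt N m| := by
  rw [abs_gridPt hN, abs_gridPt hN]
  refine mul_le_mul_of_nonneg_right ?_ (hgrid_pos hN).le
  exact_mod_cast abs_le_abs_of_mem_idxs_of_dvd_sub (aliasFreq_mem_idxs hN he m)
    (dvd_sub_aliasFreq N m)

end Grid

section Filtering

variable {N : ℤ} (ρ : ℝ → ℝ)

lemma filterP_samples_expMode (hN : 0 < N) (he : Even N) (m i : ℤ) :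
    filterP N ρ (samples N (expMode m)) i =
      ρ (gridPt N (aliasFreq N m)) * expMode m (gridPt N i) := by
  have hmem := aliasFreq_mem_idxs hN he m
  have hdvd := dvd_sub_aliasFreq N m
  rw [filterP, idft, sum_eq_single_of_mem _ hmem]
  · rw [dft_samples_expMode hN he, if_pos hdvd, mul_one, expMode_gridPt_congr hN hdvd, expMode]
  · intro l hl hne
    rw [dft_samples_expMode hN he, if_neg, mul_zero, zero_mul]
    exact fun h => hne (eq_of_mem_idxs_of_dvd_sub he hl hmem (by simpa using dvd_sub hdvd h))

lemma filterP_const_mul (c : ℂ) (f : ℤ → ℂ) (i : ℤ) :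
    filterP N ρ (fun j => c * f j) i = c * filterP N ρ f i := by
  simp only [filterP, idft, dft, mul_sum, sum_mul]
  exact sum_congr rfl fun k _ => sum_congr rfl fun j _ => by ring

variable (N) in
lemma hasSum_filterP {ι : Type*} {u : ι → ℤ → ℂ} {f : ℤ → ℂ}
    (h : ∀ j, HasSum (fun m => u m j) (f j)) (i : ℤ) :
    HasSum (fun m => filterP N ρ (u m) i) (filterP N ρ f i) := by
  simp only [filterP, idft, dft]
  exact hasSum_sum fun k _ =>
    (((hasSum_sum fun j _ => (h j).mul_right _).mul_left _).mul_left _).mul_right _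

lemma hasSum_filterP_samples_sub {f : ℝ → ℂ} (hf : Function.Periodic f (2 * Real.pi))
    (hc : Continuous f) (hs : Summable (fourierCoeffP f)) (hN : 0 < N) (he : Even N) (i : ℤ) :
    HasSum (fun m => ((ρ (gridPt N (aliasFreq N m)) : ℂ) - 1) *
      (fourierCoeffP f m * expMode m (gridPt N i)))
      (filterP N ρ (samples N f) i - f (gridPt N i)) := by
  have hfilter := hasSum_filterP N ρ (f := samples N f)
    (u := fun m j => fourierCoeffP f m * samples N (expMode m) j)
    (fun j => hasSum_fourierCoeffP hf hc hs (gridPt N j)) i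
  refine (hfilter.sub (hasSum_fourierCoeffP hf hc hs (gridPt N i))).congr_fun fun m => ?_
  rw [filterP_const_mul, filterP_samples_expMode ρ hN he]
  ring

variable {ρ}

theorem norm_filterP_samples_sub_le {s : ℕ} (hs : 1 ≤ s) {B δ : ℝ} (hδ : 0 < δ)
    (hB : ∀ x, |x| ≤ Real.pi → |ρ x| ≤ B) (hone : ∀ x, |x| ≤ δ → ρ x = 1) {f : ℝ → ℂ}
    (hf : Function.Periodic f (2 * Real.pi)) (hc : Continuous f)
    (hsob : Summable fun k : ℤ => (1 + (k : ℝ) ^ 2) ^ s * ‖fourierCoeffP f k‖ ^ 2)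
    (hN : 0 < N) (he : Even N) (i : ℤ) :
    ‖filterP N ρ (samples N f) i - f (gridPt N i)‖ ≤
      2 * (B + 1) * δ⁻¹ ^ ((s : ℝ) - 1 / 2) * hgrid N ^ ((s : ℝ) - 1 / 2) * sobolevNorm s f := by
  have hh := hgrid_pos hN
  have hsum : Summable (fourierCoeffP f) := summable_of_summable_mul_sq_norm
    (fun k => by positivity) (summable_inv_one_add_int_sq_pow hs) hsob
  have hB₀ : 0 ≤ B := (abs_nonneg _).trans (hB 0 (by simpa using Real.pi_pos.le))
  have hlow (m : ℤ) (hm : |(m : ℝ)| ≤ δ / hgrid N) : ρ (gridPt N (aliasFreq N m)) = 1 := by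
    refine hone _ ((abs_gridPt_aliasFreq_le hN he m).trans ?_)
    rwa [abs_gridPt hN, ← le_div_iff₀ hh]
  have hhigh (m : ℤ) : ‖(ρ (gridPt N (aliasFreq N m)) : ℂ) - 1‖ ≤ B + 1 := by
    refine (norm_sub_le _ _).trans ?_
    rw [Complex.norm_real, norm_one]
    gcongr
    exact hB _ (abs_gridPt_le_pi hN (aliasFreq_mem_idxs hN he m))
  refine (norm_le_of_hasSum_of_lowFreq_eq_zero hs hsob (div_pos hδ hh)
    (hasSum_filterP_samples_sub ρ hf hc hsum hN he i) (fun m hm => ?_)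
    (by positivity : 0 ≤ B + 1) fun m => ?_).trans_eq ?_
  · rw [hlow m hm, Complex.ofReal_one, sub_self, zero_mul]
  · rw [norm_mul, norm_mul, norm_expMode, mul_one]
    gcongr
    exact hhigh m
  · rw [inv_div, div_eq_inv_mul, Real.mul_rpow (inv_nonneg.2 hδ.le) hh.le, sobolevNorm]
    ring

theorem filtering_accuracy_general {s : ℕ} (hs : 1 ≤ s)
    (hbdd : BddAbove ((fun x => |ρ x|) '' Set.Icc (-Real.pi) Real.pi))
    (hone : ∀ᶠ x in nhds 0, ρ x = 1) :
    ∃ c : ℝ, 0 < c ∧ ∀ f : ℝ → ℂ, Function.Periodic f (2 * Real.pi) → Continuous f →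
      (Summable fun k : ℤ => (1 + (k : ℝ) ^ 2) ^ s * ‖fourierCoeffP f k‖ ^ 2) →
      ∀ N : ℤ, 0 < N → Even N → ∀ i : ℤ,
        ‖filterP N ρ (samples N f) i - f (gridPt N i)‖ ≤
          c * hgrid N ^ ((s : ℝ) - 1 / 2) * sobolevNorm s f := by
  obtain ⟨B, hB⟩ := hbdd
  obtain ⟨δ, hδ, hδone⟩ := Metric.nhds_basis_closedBall.eventually_iff.1 hone
  have hB' (x : ℝ) (hx : |x| ≤ Real.pi) : |ρ x| ≤ B := hB ⟨x, abs_le.1 hx, rfl⟩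
  have hB₀ : 0 ≤ B := (abs_nonneg _).trans (hB' 0 (by simpa using Real.pi_pos.le))
  exact ⟨2 * (B + 1) * δ⁻¹ ^ ((s : ℝ) - 1 / 2), by positivity, fun f hf hc hsob N hN he i =>
    norm_filterP_samples_sub_le hs hδ hB' (fun x hx => hδone (by simpa using hx))
      hf hc hsob hN he i⟩

end Filtering

namespace IsFilter

variable {ρ : ℝ → ℝ}

lemma continuous (hρ : IsFilter ρ) : Continuous ρ :=
  let ⟨_, _, hr⟩ := hρ.smooth
  hr.continuous

lemma eventually_eq_one (hρ : IsFilter ρ) : ∀ᶠ x in nhds 0, ρ x = 1 := by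
  obtain ⟨μ, hμ, -, hone⟩ := hρ.one_near_zero
  filter_upwards [Metric.closedBall_mem_nhds (0 : ℝ) (mul_pos hμ Real.pi_pos)] with x hx
  exact hone x (by simpa using hx)

end IsFilter

/-- Lemma 5.4: spectral accuracy of the numerical filtering operator. -/
theorem filtering_accuracy (s : ℕ) (hs : 1 ≤ s) (ρ : ℝ → ℝ) (hρ : IsFilter ρ) :
    ∃ c : ℝ, 0 < c ∧ ∀ f : ℝ → ℂ, Function.Periodic f (2 * Real.pi) →
      ContDiff ℝ (s : ℕ) f →
      ∀ N : ℤ, 2 ≤ N → Even N → ∀ i ∈ idxs N,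
        ‖filterP N ρ (samples N f) i - f (gridPt N i)‖ ≤
          c * hgrid N ^ ((s : ℝ) - 1 / 2) * sobolevNorm s f := by
  obtain ⟨c, hc, hbound⟩ := filtering_accuracy_general hs
    (isCompact_Icc.bddAbove_image hρ.continuous.abs.continuousOn) hρ.eventually_eq_one
  exact ⟨c, hc, fun f hf hfs N hN he i _ => hbound f hf hfs.continuous
    (summable_sobolev_of_contDiff hf hfs) N (by lia) he i⟩

end
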